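/- Let N ≥ 3 and let 0-TL̂_N be the affine nil-Temperley–Lieb algebra: the quotient of the free associative ℂ-algebra on generators u_1, …, u_N by the two-sided ideal generated by u_i², u_iu_{i+1}u_i, u_{i+1}u_iu_{i+1} for all i (indices mod N), and u_iu_j − u_ju_i for all i, j with i − j ≢ ±1 (mod N). For 1 ≤ r ≤ N−1 define e_r = Σ_{I ⊆ {1,…,N}, |I| = r} (product of the u_i, i ∈ I, in any order in which u_i stands to the left of u_j whenever i, j ∈ I and j ≡ i+1 mod N) and h_r = Σ_{I ⊆ {1,…,N}, |I| = r} (product of the u_i, i ∈ I, in any order in which u_j stands to the left of u_i whenever i, j ∈ I and j ≡ i+1 mod N); each summand is a well-defined element since non-adjacent generators commute. Then all the elements e_1,…,e_{N−1}, h_1,…,h_{N−1} pairwise commute in 0-TL̂_N. -/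

import Mathlib

noncomputable section

open scoped BigOperators

/-- The generator `u_i` of the free algebra on `u_1, …, u_N` (indices mod `N`). -/
def ugen (N : ℕ) (i : ZMod N) : FreeAlgebra ℂ (ZMod N) := FreeAlgebra.ι ℂ i

/-- The defining relations of the affine nil-Temperley–Lieb algebra `0-TL̂_N`:
`u_i² = 0`, `u_i u_{i+1} u_i = 0`, `u_{i+1} u_i u_{i+1} = 0` for all `i` (mod `N`), and
`u_i u_j = u_j u_i` whenever `i - j ≢ ±1 (mod N)`. -/
inductive TLRel (N : ℕ) : FreeAlgebra ℂ (ZMod N) → FreeAlgebra ℂ (ZMod N) → Prop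
  | sq (i : ZMod N) : TLRel N (ugen N i * ugen N i) 0
  | aba (i : ZMod N) : TLRel N (ugen N i * ugen N (i + 1) * ugen N i) 0
  | bab (i : ZMod N) : TLRel N (ugen N (i + 1) * ugen N i * ugen N (i + 1)) 0
  | comm (i j : ZMod N) (h1 : i - j ≠ 1) (h2 : j - i ≠ 1) :
      TLRel N (ugen N i * ugen N j) (ugen N j * ugen N i)

/-- The affine nil-Temperley–Lieb algebra `0-TL̂_N`. -/
abbrev TLhat (N : ℕ) := RingQuot (TLRel N)

/-- The generator `u_i` as an element of `0-TL̂_N`. -/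
def uTL (N : ℕ) (i : ZMod N) : TLhat N := RingQuot.mkAlgHom ℂ (TLRel N) (ugen N i)

/-- A canonical "gap" of a proper subset `I ⊊ ℤ/Nℤ`: the element of the complement with
the smallest representative. -/
def zgap {N : ℕ} [NeZero N] (I : Finset (ZMod N)) : ZMod N :=
  if h : ((Finset.univ \ I).image ZMod.val).Nonempty then
    ((((Finset.univ \ I).image ZMod.val).min' h : ℕ) : ZMod N)
  else 0

/-- The cyclically ordered product `∏_{i ∈ I} u_i` in which `u_i` stands to the left of
`u_{i+1}` whenever `i, i+1 ∈ I` (cyclically increasing order starting above a gap). -/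
def cycProdAsc {N : ℕ} [NeZero N] {A : Type*} [Monoid A] (u : ZMod N → A)
    (I : Finset (ZMod N)) : A :=
  ((List.range N).map fun t =>
    if zgap I + 1 + (t : ZMod N) ∈ I then u (zgap I + 1 + (t : ZMod N)) else 1).prod

/-- The cyclically ordered product `∏_{i ∈ I} u_i` in which `u_{i+1}` stands to the left of
`u_i` whenever `i, i+1 ∈ I` (cyclically decreasing order starting below a gap). -/
def cycProdDesc {N : ℕ} [NeZero N] {A : Type*} [Monoid A] (u : ZMod N → A)
    (I : Finset (ZMod N)) : A :=
  ((List.range N).map fun t =>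
    if zgap I - 1 - (t : ZMod N) ∈ I then u (zgap I - 1 - (t : ZMod N)) else 1).prod

/-- The cyclic noncommutative elementary symmetric polynomial `e_r ∈ 0-TL̂_N`. -/
def tlE (N : ℕ) [NeZero N] (r : ℕ) : TLhat N :=
  ∑ I ∈ Finset.powersetCard r (Finset.univ : Finset (ZMod N)), cycProdAsc (uTL N) I

/-- The cyclic noncommutative complete symmetric polynomial `h_r ∈ 0-TL̂_N`. -/
def tlH (N : ℕ) [NeZero N] (r : ℕ) : TLhat N :=
  ∑ I ∈ Finset.powersetCard r (Finset.univ : Finset (ZMod N)), cycProdDesc (uTL N) I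

/-!
The value of a word in the `u_i` depends only on its letters and on which of each two neighbouring
letters comes first. Write `e_I` and `h_J` for the summands of `e_r` and `h_s`.

If `I` and `J` meet, then `e_I h_J = 0`: take `i ∈ I ∩ J` with `i + 1 ∉ I ∩ J`; between the two
letters `i` of the word `e_I h_J` there is no `i - 1` and at most one `i + 1`. If `I` and `J` are
complementary in `S`, then in `e_I h_J` the letter `x` precedes its neighbour `x + 1` exactly when
`x ∈ I`, and in `h_J e_I` exactly when `x + 1 ∈ I`. Hence a permutation of `S` which is
`x ↦ x + 1` wherever that stays in `S` matches the terms of `e_r h_s` with those of `h_s e_r`.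

For `0 < m < N` we have `∑ (-1)^i e_i h_{m-i} = 0`: a letter `a ∈ S` with `a + 1 ∉ S` can be moved
between `I` and `S \ I` without changing the product, and this flips the sign. So `e_m` is a
polynomial in the `h_j` and the lower `e_i`, and `e_r` commutes with `e_m` by induction on `m`.
Exchanging `1` and `-1` in `ℤ/N` turns this into the commutation of the `h_r`.
-/

section Words

variable {α M : Type*}

theorem prod_map_filter_eq_prod_map_ite [Monoid M] (p : α → Prop) [DecidablePred p] (f : α → M)
    (l : List α) : ((l.filter p).map f).prod = (l.map fun x => if p x then f x else 1).prod := by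
  induction l with
  | nil => rfl
  | cons x l ih => by_cases hx : p x <;> simp [hx, ih]

theorem prod_map_eq_of_perm [Monoid M] {R : α → α → Prop} {f : α → M}
    (hf : ∀ x y, R x y → R y x → Commute (f x) (f y)) {l l' : List α} (h : l.Perm l')
    (hl : l.Pairwise R) (hl' : l'.Pairwise R) : (l.map f).prod = (l'.map f).prod := by
  induction l generalizing l' with
  | nil => rw [h.nil_eq]
  | cons a t ih =>
    obtain ⟨p, q, rfl⟩ := List.append_of_mem (h.subset List.mem_cons_self)
    have ht : t.Perm (p ++ q) := (h.trans List.perm_middle).cons_inv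
    have hpq : (p ++ q).Pairwise R :=
      hl'.sublist (List.Sublist.append_left (List.sublist_cons_self a q) p)
    have ha : Commute (f a) (p.map f).prod := by
      refine Commute.list_prod_right _ _ (List.forall_mem_map.2 fun x hx => hf a x ?_ ?_)
      · exact List.rel_of_pairwise_cons hl (ht.mem_iff.2 (List.mem_append_left q hx))
      · exact (List.pairwise_append.1 hl').2.2 x hx a List.mem_cons_self
    simp only [List.map_cons, List.map_append, List.prod_cons, List.prod_append]
    rw [ih ht hl.of_cons hpq, List.map_append, List.prod_append, ← mul_assoc, ha.eq, mul_assoc]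

theorem mul_prod_map_mul_eq_zero [DecidableEq α] [MonoidWithZero M] {f : α → M} {a b : α}
    {l : List α} (hsq : f a * f a = 0) (haba : f a * f b * f a = 0)
    (hl : ∀ x ∈ l, x ≠ b → Commute (f a) (f x)) (hb : l.count b ≤ 1) :
    f a * (l.map f).prod * f a = 0 := by
  have hcomm : ∀ t ⊆ l, b ∉ t → Commute (f a) (t.map f).prod := fun t ht hbt =>
    Commute.list_prod_right _ _ (List.forall_mem_map.2 fun x hx =>
      hl x (ht hx) (ne_of_mem_of_not_mem hx hbt))
  by_cases hbl : b ∈ l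
  · obtain ⟨p, q, rfl⟩ := List.append_of_mem hbl
    rw [List.count_append, List.count_cons_self] at hb
    have hp : Commute (f a) (p.map f).prod :=
      hcomm p (List.subset_append_left _ _) (List.count_eq_zero.1 (by omega))
    have hq : Commute (f a) (q.map f).prod :=
      hcomm q (fun x hx => by simp [hx]) (List.count_eq_zero.1 (by omega))
    calc f a * ((p ++ b :: q).map f).prod * f a
        = f a * (p.map f).prod * f b * ((q.map f).prod * f a) := by
          simp only [List.map_append, List.map_cons, List.prod_append, List.prod_cons, mul_assoc]
      _ = (p.map f).prod * (f a * f b * f a) * (q.map f).prod := by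
          rw [hp.eq, ← hq.eq]; simp only [mul_assoc]
      _ = 0 := by rw [haba, mul_zero, zero_mul]
  · rw [(hcomm l (List.Subset.refl l) hbl).eq, mul_assoc, hsq, mul_zero]

end Words

theorem exists_perm_eqOn_of_mem {α : Type*} (S : Finset α) {σ : α → α}
    (hσ : Function.Injective σ) : ∃ π : Equiv.Perm α,
      S.map π.toEmbedding = S ∧ ∀ x ∈ S, σ x ∈ S → π x = σ x := by
  classical
  obtain ⟨g, hg⟩ := Finset.exists_equiv_extend_of_card_eq (α := S) (t := S) (by simp)
    (s := Finset.univ.filter fun x : S => σ x ∈ S) (f := fun x => σ x)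
    (by
      rw [Finset.image_subset_iff]
      exact fun x hx => (Finset.mem_filter.1 hx).2)
    (fun x _ y _ h => Subtype.ext (hσ h))
  refine ⟨Equiv.Perm.ofSubtype g, ?_, fun x hx hσx => ?_⟩
  · refine Finset.eq_of_subset_of_card_le (fun y hy => ?_) (Finset.card_map _).ge
    obtain ⟨x, hx, rfl⟩ := Finset.mem_map.1 hy
    exact (Equiv.Perm.ofSubtype_apply_mem_iff_mem g x).2 hx
  · rw [Equiv.Perm.ofSubtype_apply_of_mem g hx]
    exact hg ⟨x, hx⟩ (by simpa using hσx)

theorem sdiff_map_sdiff_of_map_eq {α : Type*} [DecidableEq α] {f : α ↪ α} {S T : Finset α}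
    (hf : S.map f = S) (hT : T ⊆ S) : S \ (S \ T).map f = T.map f := by
  rw [Finset.map_sdiff, hf, Finset.sdiff_sdiff_eq_self (hf ▸ Finset.map_subset_map.2 hT)]

theorem sum_powersetCard_map_sdiff_of_map_eq {α M : Type*} [DecidableEq α] [AddCommMonoid M]
    {f : α ↪ α} {S : Finset α} {r s : ℕ} (hf : S.map f = S) (hS : S.card = r + s)
    (F : Finset α → M) :
    ∑ I ∈ Finset.powersetCard r S, F ((S \ I).map f) = ∑ J ∈ Finset.powersetCard s S, F J := by
  refine Finset.sum_nbij (fun I => (S \ I).map f) (fun I hI => ?_) (fun I hI J hJ h => ?_) ?_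
    fun _ _ => rfl
  · rw [Finset.mem_powersetCard] at hI ⊢
    refine ⟨(Finset.map_subset_map.2 Finset.sdiff_subset).trans hf.subset, ?_⟩
    rw [Finset.card_map, Finset.card_sdiff_of_subset hI.1]
    omega
  · have hIS := (Finset.mem_powersetCard.1 hI).1
    have hJS := (Finset.mem_powersetCard.1 hJ).1
    rw [← Finset.sdiff_sdiff_eq_self hIS, Finset.map_injective f h, Finset.sdiff_sdiff_eq_self hJS]
  · intro J hJ
    obtain ⟨hJS, hJcard⟩ := Finset.mem_powersetCard.1 hJ
    obtain ⟨K, hKS, rfl⟩ := Finset.subset_map_iff.1 (hJS.trans hf.symm.subset)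
    rw [Finset.card_map] at hJcard
    refine ⟨S \ K, Finset.mem_powersetCard.2 ⟨Finset.sdiff_subset, ?_⟩, ?_⟩
    · rw [Finset.card_sdiff_of_subset hKS]
      omega
    · simp only [Finset.sdiff_sdiff_eq_self hKS]

section Relations

variable {N : ℕ} {A : Type*}

/-- The relations of the affine nil-Temperley–Lieb algebra for a family indexed by `ℤ/N`, where
the neighbours of `i` in the cycle are `i ± ε`. The relation `u_i u_j u_i = 0` is imposed for all
`i, j`; for non-adjacent indices it follows from the other two. -/
structure IsNilTLFamily [MonoidWithZero A] (ε : (ZMod N)ˣ) (u : ZMod N → A) : Prop where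
  mul_self (i : ZMod N) : u i * u i = 0
  mul_mul_self (i j : ZMod N) : u i * u j * u i = 0
  commute {i j : ZMod N} : j ≠ i + ε → i ≠ j + ε → Commute (u i) (u j)

/-- The orders of a word in which, for neighbours `x` and `x + ε`, the letter `x` comes first
exactly when `p x`: `Orients ε p x y` says that `x` may precede `y`. -/
def Orients (ε : (ZMod N)ˣ) (p : ZMod N → Prop) (x y : ZMod N) : Prop :=
  (y = x + ε → p x) ∧ (x = y + ε → ¬ p y)

variable [MonoidWithZero A] {ε : (ZMod N)ˣ} {p : ZMod N → Prop} {u : ZMod N → A}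

namespace IsNilTLFamily

theorem neg (hu : IsNilTLFamily ε u) : IsNilTLFamily (-ε) u where
  mul_self := hu.mul_self
  mul_mul_self := hu.mul_mul_self
  commute {i j} hij hji := hu.commute
    (fun h => hji (by rw [h, Units.val_neg, add_neg_cancel_right]))
    (fun h => hij (by rw [h, Units.val_neg, add_neg_cancel_right]))

theorem commute_of_orients (hu : IsNilTLFamily ε u) (x y : ZMod N) (hxy : Orients ε p x y)
    (hyx : Orients ε p y x) : Commute (u x) (u y) :=
  hu.commute (fun h => hyx.2 h (hxy.1 h)) (fun h => hxy.2 h (hyx.1 h))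

end IsNilTLFamily

end Relations

section CyclicWords

variable {N : ℕ} [NeZero N]

theorem exists_mem_add_notMem (ε : (ZMod N)ˣ) {S : Finset (ZMod N)} (hS : S ≠ Finset.univ)
    (hne : S.Nonempty) : ∃ i ∈ S, i + ε ∉ S := by
  by_contra! hclosed
  obtain ⟨i, hi⟩ := hne
  have hmem (n : ℕ) : i + n * ε ∈ S := by
    induction n with
    | zero => simpa using hi
    | succ n ih =>
      rw [Nat.cast_succ, add_one_mul, ← add_assoc]
      exact hclosed _ ih
  refine hS (Finset.eq_univ_iff_forall.2 fun j => ?_)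
  simpa using hmem ((j - i) * ↑ε⁻¹ : ZMod N).val

theorem zgap_notMem {I : Finset (ZMod N)} (hI : I ≠ Finset.univ) : zgap I ∉ I := by
  have hne : ((Finset.univ \ I).image ZMod.val).Nonempty := by
    rw [Finset.image_nonempty, Finset.sdiff_nonempty, Finset.univ_subset_iff]
    exact hI
  obtain ⟨x, hx, hval⟩ := Finset.mem_image.1 (Finset.min'_mem _ hne)
  rw [zgap, dif_pos hne, ← hval, ZMod.natCast_zmod_val]
  exact (Finset.mem_sdiff.1 hx).2

/-- The elements of `I` in the order in which the walk `g + ε, g + 2ε, …` around `ℤ/N` meets them,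
where `g = zgap I`. The unit `ε` lets one notion cover the increasing (`ε = 1`) and the decreasing
(`ε = -1`) cyclic order. -/
def cycWord (ε : (ZMod N)ˣ) (I : Finset (ZMod N)) : List (ZMod N) :=
  ((List.range N).map fun t : ℕ => zgap I + ε * (t + 1)).filter (· ∈ I)

theorem mem_cycWord {ε : (ZMod N)ˣ} {I : Finset (ZMod N)} {x : ZMod N} :
    x ∈ cycWord ε I ↔ x ∈ I := by
  simp only [cycWord, List.mem_filter, List.mem_map, List.mem_range, decide_eq_true_eq,
    and_iff_right_iff_imp]
  exact fun _ => ⟨(↑ε⁻¹ * (x - zgap I) - 1 : ZMod N).val, ZMod.val_lt _, by simp⟩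

theorem nodup_cycWord (ε : (ZMod N)ˣ) (I : Finset (ZMod N)) : (cycWord ε I).Nodup := by
  refine (List.Nodup.map_on (fun s hs t ht h => ?_) List.nodup_range).filter _
  have hst : (s : ZMod N) = t := add_right_cancel (ε.mul_right_inj.1 (add_left_cancel h))
  exact Nat.ModEq.eq_of_lt_of_lt ((ZMod.natCast_eq_natCast_iff _ _ _).1 hst)
    (List.mem_range.1 hs) (List.mem_range.1 ht)

theorem coe_cycWord (ε : (ZMod N)ˣ) (I : Finset (ZMod N)) :
    (cycWord ε I : Multiset (ZMod N)) = I.val :=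
  (Multiset.Nodup.ext (Multiset.coe_nodup.2 (nodup_cycWord ε I)) I.nodup).2 fun _ => mem_cycWord

theorem pairwise_cycWord (ε : (ZMod N)ˣ) {I : Finset (ZMod N)} (hI : I ≠ Finset.univ) :
    (cycWord ε I).Pairwise fun x y : ZMod N => x ≠ y + ε := by
  rw [cycWord, List.pairwise_filter, List.pairwise_map]
  refine List.pairwise_lt_range.imp_of_mem fun {s t} hs ht hst _ hmem h => ?_
  have hcast : (s : ZMod N) = (t + 1 : ℕ) := by
    refine ε.mul_right_inj.1 ?_
    push_cast
    linear_combination h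
  have hmod : s ≡ t + 1 [MOD N] := (ZMod.natCast_eq_natCast_iff _ _ _).1 hcast
  have ht' : t + 1 = N := by
    by_contra hne
    have := hmod.eq_of_lt_of_lt (List.mem_range.1 hs) (by have := List.mem_range.1 ht; omega)
    omega
  have hgap : (t : ZMod N) + 1 = 0 := by rw [← Nat.cast_add_one, ht', ZMod.natCast_self]
  rw [hgap, mul_zero, add_zero, decide_eq_true_eq] at hmem
  exact zgap_notMem hI hmem

end CyclicWords

section Monomials

variable {N : ℕ} [NeZero N] {A : Type*}

/-- The monomial `∏_{i ∈ I} u_i` in the cyclic order of step `ε`. -/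
def cycMonomial [Monoid A] (ε : (ZMod N)ˣ) (u : ZMod N → A) (I : Finset (ZMod N)) : A :=
  ((cycWord ε I).map u).prod

theorem cycProdAsc_eq_cycMonomial [Monoid A] (u : ZMod N → A) (I : Finset (ZMod N)) :
    cycProdAsc u I = cycMonomial 1 u I := by
  rw [cycMonomial, cycWord, prod_map_filter_eq_prod_map_ite, cycProdAsc]
  simp [← List.map_eq_flatMap, Function.comp_def, add_assoc, add_comm (1 : ZMod N)]

theorem cycProdDesc_eq_cycMonomial [Monoid A] (u : ZMod N → A) (I : Finset (ZMod N)) :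
    cycProdDesc u I = cycMonomial (-1) u I := by
  rw [cycMonomial, cycWord, prod_map_filter_eq_prod_map_ite, cycProdDesc]
  simp [← List.map_eq_flatMap, Function.comp_def, sub_eq_add_neg, add_assoc]

variable {ε : (ZMod N)ˣ} {p : ZMod N → Prop} {S I J : Finset (ZMod N)}

theorem pairwise_cycWord_append (hIS : I ⊆ S) (hI : I ≠ Finset.univ) (hSI : S \ I ≠ Finset.univ)
    (hp : ∀ x ∈ S, x + ε ∈ S → (p x ↔ x ∈ I)) :
    (cycWord ε I ++ cycWord (-ε) (S \ I)).Pairwise (Orients ε p) := by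
  refine List.pairwise_append.2 ⟨(pairwise_cycWord ε hI).imp_of_mem ?_,
    (pairwise_cycWord (-ε) hSI).imp_of_mem ?_, ?_⟩ <;>
  simp only [mem_cycWord, Finset.mem_sdiff, Orients, Units.val_neg] <;>
  grind

theorem pairwise_cycWord_neg_append (hIS : I ⊆ S) (hI : I ≠ Finset.univ) (hSI : S \ I ≠ Finset.univ)
    (hp : ∀ x ∈ S, x + ε ∈ S → (p x ↔ x + ε ∉ I)) :
    (cycWord (-ε) I ++ cycWord ε (S \ I)).Pairwise (Orients ε p) := by
  refine List.pairwise_append.2 ⟨(pairwise_cycWord (-ε) hI).imp_of_mem ?_,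
    (pairwise_cycWord ε hSI).imp_of_mem ?_, ?_⟩ <;>
  simp only [mem_cycWord, Finset.mem_sdiff, Orients, Units.val_neg] <;>
  grind

theorem coe_cycWord_append (δ : (ZMod N)ˣ) (hIS : I ⊆ S) :
    (↑(cycWord ε I ++ cycWord δ (S \ I)) : Multiset (ZMod N)) = S.val := by
  rw [← Multiset.coe_add, coe_cycWord, coe_cycWord, Finset.sdiff_val,
    add_tsub_cancel_of_le (Finset.val_le_iff.2 hIS)]

variable [MonoidWithZero A] {u : ZMod N → A}

namespace IsNilTLFamily

theorem cycMonomial_mul_eq_zero (hu : IsNilTLFamily ε u) (hI : I ≠ Finset.univ)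
    (hJ : J ≠ Finset.univ) (hIJ : ¬ Disjoint I J) :
    cycMonomial ε u I * cycMonomial (-ε) u J = 0 := by
  obtain ⟨i, hi, hiε⟩ := exists_mem_add_notMem ε
    (S := I ∩ J) (fun h => hI (Finset.univ_subset_iff.1 (h ▸ Finset.inter_subset_left)))
    (Finset.not_disjoint_iff_nonempty_inter.1 hIJ)
  rw [Finset.mem_inter] at hi hiε
  obtain ⟨a, b, hab⟩ := List.append_of_mem (mem_cycWord (ε := ε).2 hi.1)
  obtain ⟨c, d, hcd⟩ := List.append_of_mem (mem_cycWord (ε := -ε).2 hi.2)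
  have hordI : (a ++ i :: b).Pairwise (fun x y : ZMod N => x ≠ y + ε) :=
    hab ▸ pairwise_cycWord ε hI
  have hordJ : (c ++ i :: d).Pairwise (fun x y : ZMod N => x ≠ y + ↑(-ε)) :=
    hcd ▸ pairwise_cycWord (-ε) hJ
  have hcount : (b ++ c).count (i + ε) ≤ 1 := by
    have hb : b.count (i + ε) ≤ 1 := List.nodup_iff_count_le_one.1
      ((hab ▸ nodup_cycWord ε I).of_append_right.of_cons) _
    have hc : c.count (i + ε) ≤ 1 := List.nodup_iff_count_le_one.1
      ((hcd ▸ nodup_cycWord (-ε) J).of_append_left) _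
    by_contra hlt
    rw [List.count_append] at hlt
    have hmemb : i + ε ∈ b := List.count_pos_iff.1 (by omega)
    have hmemc : i + ε ∈ c := List.count_pos_iff.1 (by omega)
    have hmemI : i + ε ∈ cycWord ε I := by simp [hab, hmemb]
    have hmemJ : i + ε ∈ cycWord (-ε) J := by simp [hcd, hmemc]
    exact hiε ⟨mem_cycWord.1 hmemI, mem_cycWord.1 hmemJ⟩
  have hcomm : ∀ x ∈ b ++ c, x ≠ i + ε → Commute (u i) (u x) := by
    intro x hx hxi
    refine hu.commute hxi fun hix => ?_
    rcases List.mem_append.1 hx with hxb | hxc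
    · exact List.rel_of_pairwise_cons (List.pairwise_append.1 hordI).2.1 hxb hix
    · refine (List.pairwise_append.1 hordJ).2.2 x hxc i List.mem_cons_self ?_
      rw [hix, Units.val_neg, add_neg_cancel_right]
  have hzero := mul_prod_map_mul_eq_zero (hu.mul_self i) (hu.mul_mul_self i (i + ε)) hcomm hcount
  calc cycMonomial ε u I * cycMonomial (-ε) u J
      = (a.map u).prod * (u i * ((b ++ c).map u).prod * u i) * (d.map u).prod := by
        simp only [cycMonomial, hab, hcd, List.map_append, List.map_cons, List.prod_append,
          List.prod_cons, mul_assoc]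
    _ = 0 := by rw [hzero, mul_zero, zero_mul]

theorem cycMonomial_mul_eq_mul (hu : IsNilTLFamily ε u) (hIS : I ⊆ S) (hJS : J ⊆ S)
    (hI : I ≠ Finset.univ) (hSI : S \ I ≠ Finset.univ) (hJ : J ≠ Finset.univ)
    (hSJ : S \ J ≠ Finset.univ) (h : ∀ x ∈ S, x + ε ∈ S → (x ∈ I ↔ x ∈ J)) :
    cycMonomial ε u I * cycMonomial (-ε) u (S \ I) =
      cycMonomial ε u J * cycMonomial (-ε) u (S \ J) := by
  simp only [cycMonomial, ← List.prod_append, ← List.map_append]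
  refine prod_map_eq_of_perm (R := Orients ε (· ∈ I)) hu.commute_of_orients
    (Multiset.coe_eq_coe.1 ?_) (pairwise_cycWord_append hIS hI hSI fun _ _ _ => Iff.rfl)
    (pairwise_cycWord_append hJS hJ hSJ h)
  rw [coe_cycWord_append _ hIS, coe_cycWord_append _ hJS]

theorem cycMonomial_mul_eq_mul_swap (hu : IsNilTLFamily ε u) (hIS : I ⊆ S) (hJS : J ⊆ S)
    (hI : I ≠ Finset.univ) (hSI : S \ I ≠ Finset.univ) (hJ : J ≠ Finset.univ)
    (hSJ : S \ J ≠ Finset.univ) (h : ∀ x ∈ S, x + ε ∈ S → (x ∈ I ↔ x + ε ∉ J)) :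
    cycMonomial ε u I * cycMonomial (-ε) u (S \ I) =
      cycMonomial (-ε) u J * cycMonomial ε u (S \ J) := by
  simp only [cycMonomial, ← List.prod_append, ← List.map_append]
  refine prod_map_eq_of_perm (R := Orients ε (· ∈ I)) hu.commute_of_orients
    (Multiset.coe_eq_coe.1 ?_) (pairwise_cycWord_append hIS hI hSI fun _ _ _ => Iff.rfl)
    (pairwise_cycWord_neg_append hJS hJ hSJ h)
  rw [coe_cycWord_append _ hIS, coe_cycWord_append _ hJS]

end IsNilTLFamily

end Monomials

section SymmetricPolynomials

variable {N : ℕ} [NeZero N] {A : Type*} {ε : (ZMod N)ˣ} {u : ZMod N → A} {r s m : ℕ}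

/-- The cyclic noncommutative symmetric polynomial of degree `r` in the order of step `ε`: it is
`e_r` for `ε = 1` and `h_r` for `ε = -1`. -/
def cycSymm [Semiring A] (ε : (ZMod N)ˣ) (u : ZMod N → A) (r : ℕ) : A :=
  ∑ I ∈ Finset.powersetCard r Finset.univ, cycMonomial ε u I

theorem cycSymm_zero [Semiring A] (ε : (ZMod N)ˣ) (u : ZMod N → A) : cycSymm ε u 0 = 1 := by
  simp [cycSymm, cycMonomial, cycWord]

theorem ne_univ_of_card_lt {I : Finset (ZMod N)} (h : I.card < N) : I ≠ Finset.univ := by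
  rintro rfl
  simp [ZMod.card] at h

namespace IsNilTLFamily

theorem cycSymm_mul_cycSymm_neg [Semiring A] (hu : IsNilTLFamily ε u) (hr : r < N) (hs : s < N) :
    cycSymm ε u r * cycSymm (-ε) u s = ∑ S ∈ Finset.powersetCard (r + s) Finset.univ,
      ∑ I ∈ Finset.powersetCard r S, cycMonomial ε u I * cycMonomial (-ε) u (S \ I) := by
  rw [cycSymm, cycSymm, Finset.sum_mul_sum, ← Finset.sum_product', Finset.sum_sigma']
  symm
  refine Finset.sum_of_injOn (fun x => (x.2, x.1 \ x.2)) ?_ ?_ ?_ fun _ _ => rfl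
  · rintro ⟨S, I⟩ hS ⟨T, J⟩ hT h
    simp only [Finset.coe_sigma, Set.mem_sigma_iff, Finset.mem_coe, Finset.mem_powersetCard]
      at hS hT
    obtain ⟨rfl, h⟩ := Prod.mk.inj h
    rw [← Finset.union_sdiff_of_subset hS.2.1, ← Finset.union_sdiff_of_subset hT.2.1, h]
  · rintro ⟨S, I⟩ hS
    simp only [Finset.coe_sigma, Set.mem_sigma_iff, Finset.mem_coe, Finset.mem_powersetCard] at hS
    simp only [Finset.mem_coe, Finset.mem_product, Finset.mem_powersetCard, Finset.subset_univ,
      true_and, Finset.card_sdiff_of_subset hS.2.1]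
    omega
  · rintro ⟨I, J⟩ hIJ hnotMem
    simp only [Finset.mem_product, Finset.mem_powersetCard, Finset.subset_univ, true_and] at hIJ
    refine hu.cycMonomial_mul_eq_zero (ne_univ_of_card_lt (hIJ.1.trans_lt hr))
      (ne_univ_of_card_lt (hIJ.2.trans_lt hs)) fun hdisj => hnotMem ⟨⟨I ∪ J, I⟩, ?_, ?_⟩
    · simp [Finset.card_union_of_disjoint hdisj, hIJ]
    · simp [Finset.union_sdiff_cancel_left hdisj]

theorem commute_cycSymm_neg [Semiring A] (hu : IsNilTLFamily ε u) (hr : r < N) (hs : s < N) :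
    Commute (cycSymm ε u r) (cycSymm (-ε) u s) := by
  have hswap := hu.neg.cycSymm_mul_cycSymm_neg hs hr
  rw [neg_neg, add_comm s r] at hswap
  rw [Commute, SemiconjBy, hu.cycSymm_mul_cycSymm_neg hr hs, hswap]
  refine Finset.sum_congr rfl fun S hS => ?_
  have hcard : S.card = r + s := (Finset.mem_powersetCard.1 hS).2
  obtain ⟨π, hπ, hshift⟩ := exists_perm_eqOn_of_mem S (add_left_injective (ε : ZMod N))
  rw [← sum_powersetCard_map_sdiff_of_map_eq hπ hcard]
  refine Finset.sum_congr rfl fun I hI => ?_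
  obtain ⟨hIS, hIcard⟩ := Finset.mem_powersetCard.1 hI
  have hSIcard : (S \ I).card = s := by rw [Finset.card_sdiff_of_subset hIS]; omega
  have hI' := ne_univ_of_card_lt (hIcard.trans_lt hr)
  have hSI' := ne_univ_of_card_lt (hSIcard.trans_lt hs)
  have hcompl := sdiff_map_sdiff_of_map_eq hπ hIS
  refine hu.cycMonomial_mul_eq_mul_swap hIS
    ((Finset.map_subset_map.2 Finset.sdiff_subset).trans hπ.subset) hI' hSI'
    (ne_univ_of_card_lt (by rwa [Finset.card_map, hSIcard]))
    (ne_univ_of_card_lt (by rwa [hcompl, Finset.card_map, hIcard])) fun x hx hxε => ?_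
  rw [← hshift x hx hxε, Finset.mem_map_equiv, Equiv.symm_apply_apply]
  simp [hx]

theorem sum_neg_one_pow_mul_cycMonomial_eq_zero [Ring A] (hu : IsNilTLFamily ε u)
    {S : Finset (ZMod N)} (hS : S ≠ Finset.univ) (hne : S.Nonempty) :
    ∑ I ∈ S.powerset, (-1) ^ I.card * (cycMonomial ε u I * cycMonomial (-ε) u (S \ I)) = 0 := by
  have hproper : ∀ I ⊆ S, I ≠ Finset.univ := by
    rintro _ hIS rfl
    exact hS (Finset.univ_subset_iff.1 hIS)
  obtain ⟨a, ha, haε⟩ := exists_mem_add_notMem ε hS hne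
  rw [← Finset.insert_erase ha, Finset.sum_powerset_insert (Finset.notMem_erase a S),
    ← Finset.sum_add_distrib, Finset.insert_erase ha]
  refine Finset.sum_eq_zero fun I hI => ?_
  obtain ⟨hIS, haI⟩ := Finset.subset_erase.1 (Finset.mem_powerset.1 hI)
  have hins : insert a I ⊆ S := Finset.insert_subset ha hIS
  have hmove : cycMonomial ε u I * cycMonomial (-ε) u (S \ I) =
      cycMonomial ε u (insert a I) * cycMonomial (-ε) u (S \ insert a I) := by
    refine hu.cycMonomial_mul_eq_mul hIS hins (hproper _ hIS) (hproper _ Finset.sdiff_subset)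
      (hproper _ hins) (hproper _ Finset.sdiff_subset) fun x _ hx => ?_
    rw [Finset.mem_insert, or_iff_right]
    rintro rfl
    exact haε hx
  rw [hmove, Finset.card_insert_of_notMem haI, pow_succ, mul_neg_one, neg_mul, add_neg_cancel]

theorem sum_neg_one_pow_mul_cycSymm_eq_zero [Ring A] (hu : IsNilTLFamily ε u) (hm : m ≠ 0)
    (hmN : m < N) :
    ∑ i ∈ Finset.range (m + 1), (-1) ^ i * (cycSymm ε u i * cycSymm (-ε) u (m - i)) = 0 := by
  calc ∑ i ∈ Finset.range (m + 1), (-1) ^ i * (cycSymm ε u i * cycSymm (-ε) u (m - i))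
      = ∑ i ∈ Finset.range (m + 1), ∑ S ∈ Finset.powersetCard m Finset.univ,
          ∑ I ∈ Finset.powersetCard i S,
            (-1) ^ I.card * (cycMonomial ε u I * cycMonomial (-ε) u (S \ I)) := by
        refine Finset.sum_congr rfl fun i hi => ?_
        have him : i ≤ m := Nat.lt_succ_iff.1 (Finset.mem_range.1 hi)
        rw [hu.cycSymm_mul_cycSymm_neg (him.trans_lt hmN) ((Nat.sub_le m i).trans_lt hmN),
          Nat.add_sub_of_le him, Finset.mul_sum]
        refine Finset.sum_congr rfl fun S _ => ?_
        rw [Finset.mul_sum]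
        refine Finset.sum_congr rfl fun I hI => ?_
        rw [(Finset.mem_powersetCard.1 hI).2]
    _ = ∑ S ∈ Finset.powersetCard m Finset.univ, ∑ I ∈ S.powerset,
          (-1) ^ I.card * (cycMonomial ε u I * cycMonomial (-ε) u (S \ I)) := by
        rw [Finset.sum_comm]
        refine Finset.sum_congr rfl fun S hS => ?_
        rw [Finset.sum_powerset, (Finset.mem_powersetCard.1 hS).2]
    _ = 0 := by
        refine Finset.sum_eq_zero fun S hS => ?_
        have hcard : S.card = m := (Finset.mem_powersetCard.1 hS).2
        exact hu.sum_neg_one_pow_mul_cycMonomial_eq_zero (ne_univ_of_card_lt (hcard.trans_lt hmN))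
          (Finset.card_ne_zero.1 (hcard.trans_ne hm))

theorem commute_cycSymm [Ring A] (hu : IsNilTLFamily ε u) (hr : r < N) (hs : s < N) :
    Commute (cycSymm ε u r) (cycSymm ε u s) := by
  induction s using Nat.strong_induction_on with
  | _ s ih =>
  obtain rfl | hs0 := eq_or_ne s 0
  · rw [cycSymm_zero]
    exact Commute.one_right _
  have hrec := hu.sum_neg_one_pow_mul_cycSymm_eq_zero hs0 hs
  rw [Finset.sum_range_succ, Nat.sub_self, cycSymm_zero, mul_one] at hrec
  have hlower : Commute (cycSymm ε u r)
      (∑ i ∈ Finset.range s, (-1) ^ i * (cycSymm ε u i * cycSymm (-ε) u (s - i))) := by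
    refine Commute.sum_right _ _ _ fun i hi => ?_
    have his : i < s := Finset.mem_range.1 hi
    exact ((Commute.neg_one_right _).pow_right i).mul_right
      ((ih i his (his.trans hs)).mul_right
        (hu.commute_cycSymm_neg hr ((Nat.sub_le s i).trans_lt hs)))
  have htop : Commute (cycSymm ε u r) ((-1) ^ s * cycSymm ε u s) := by
    rw [eq_neg_of_add_eq_zero_right hrec]
    exact hlower.neg_right
  simpa only [← mul_assoc, ← pow_add, Even.neg_one_pow ⟨s, rfl⟩, one_mul] using
    ((Commute.neg_one_right _).pow_right s).mul_right htop

end IsNilTLFamily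

end SymmetricPolynomials

theorem isNilTLFamily_uTL (N : ℕ) : IsNilTLFamily 1 (uTL N) := by
  have hcomm (i j : ZMod N) (hij : i - j ≠ 1) (hji : j - i ≠ 1) :
      uTL N i * uTL N j = uTL N j * uTL N i := by
    simpa only [uTL, map_mul] using RingQuot.mkAlgHom_rel ℂ (TLRel.comm i j hij hji)
  have hsq (i : ZMod N) : uTL N i * uTL N i = 0 := by
    simpa only [uTL, map_mul, map_zero] using RingQuot.mkAlgHom_rel ℂ (TLRel.sq i)
  refine ⟨hsq, fun i j => ?_, fun {i j} hj hi => hcomm i j ?_ ?_⟩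
  · by_cases hij : i - j = 1
    · obtain rfl := sub_eq_iff_eq_add'.1 hij
      simpa only [uTL, map_mul, map_zero] using RingQuot.mkAlgHom_rel ℂ (TLRel.bab j)
    by_cases hji : j - i = 1
    · obtain rfl := sub_eq_iff_eq_add'.1 hji
      simpa only [uTL, map_mul, map_zero] using RingQuot.mkAlgHom_rel ℂ (TLRel.aba i)
    · rw [mul_assoc, ← hcomm i j hij hji, ← mul_assoc, hsq, zero_mul]
  · exact fun h => hi (sub_eq_iff_eq_add'.1 h)
  · exact fun h => hj (sub_eq_iff_eq_add'.1 h)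

theorem tlE_eq_cycSymm (N : ℕ) [NeZero N] (r : ℕ) : tlE N r = cycSymm 1 (uTL N) r :=
  Finset.sum_congr rfl fun I _ => cycProdAsc_eq_cycMonomial (uTL N) I

theorem tlH_eq_cycSymm (N : ℕ) [NeZero N] (r : ℕ) : tlH N r = cycSymm (-1) (uTL N) r :=
  Finset.sum_congr rfl fun I _ => cycProdDesc_eq_cycMonomial (uTL N) I

theorem nilTL_symm_commute_general {N : ℕ} [NeZero N] {A : Type*} [Ring A] {ε : (ZMod N)ˣ}
    {u : ZMod N → A} (hu : IsNilTLFamily ε u) {r s : ℕ} (hr : r < N) (hs : s < N) :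
    Commute (cycSymm ε u r) (cycSymm ε u s) ∧
    Commute (cycSymm ε u r) (cycSymm (-ε) u s) ∧
    Commute (cycSymm (-ε) u r) (cycSymm (-ε) u s) :=
  ⟨hu.commute_cycSymm hr hs, hu.commute_cycSymm_neg hr hs, hu.neg.commute_cycSymm hr hs⟩

/-- In the affine nil-Temperley–Lieb algebra all the cyclic
noncommutative elementary and complete symmetric polynomials
`e_1, …, e_{N-1}, h_1, …, h_{N-1}` pairwise commute. -/
theorem nilTL_symm_commute (N : ℕ) [NeZero N] (hN : 3 ≤ N) (r s : ℕ)
    (hr1 : 1 ≤ r) (hr2 : r ≤ N - 1) (hs1 : 1 ≤ s) (hs2 : s ≤ N - 1) :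
    tlE N r * tlE N s = tlE N s * tlE N r ∧
    tlE N r * tlH N s = tlH N s * tlE N r ∧
    tlH N r * tlH N s = tlH N s * tlH N r := by
  simp only [tlE_eq_cycSymm, tlH_eq_cycSymm]
  exact nilTL_symm_commute_general (isNilTLFamily_uTL N) (by omega) (by omega)
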